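/- arXiv:2503.04663 — 7 statements merged into one kernel-verified Lean document; each statement's English description precedes it below -/
import Mathlib

section
/- For every natural number α, every real number x, and every real number t with |t| < 1, the series Σ_{n=0}^∞ L_n^{(α)}(x)·t^n/n! converges, with sum equal to exp(−x·t/(1−t))/(1−t)^{α+1}. -/
/-!
By the definition of `L_n^{(α)}`, the `n`-th term of the series is the sum over the antidiagonal
`k + m = n` of the double family `(-x)^k / k! · C(k + m + α, m) · t^(k + m)`. Summing over `m`
first gives, by the negative binomial series, `(-x * t)^k / k! / (1 - t)^(k + α + 1)`; summing that
over `k` gives the exponential series of `-x * t / (1 - t)` divided by `(1 - t)^(α + 1)`. The same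
computation for `|x|` and `|t|` shows that the double family is absolutely summable, so it may be
summed along antidiagonals instead.
-/

open Nat Finset

/-- Generalized Laguerre polynomial of order `α` with integer coefficients:
`L_n^{(α)}(x) = Σ_{k=0}^n (n!/k!)·C(n+α, n−k)·(−x)^k`. -/
noncomputable def lag (n α : ℕ) (x : ℝ) : ℝ :=
  ∑ k ∈ Finset.range (n + 1), (n ! : ℝ) / (k ! : ℝ) * ((n + α).choose (n - k)) * (-x) ^ k

/-- The double family `y^k / k! · C(k + m + α, m) · t^(k + m)` indexed by `p = (k, m)`. The binomial
coefficient is written as `C(m + (k + α), k + α)`, as in the negative binomial series. -/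
noncomputable def lagTerm (α : ℕ) (y t : ℝ) (p : ℕ × ℕ) : ℝ :=
  y ^ p.1 / (p.1 ! : ℝ) * t ^ p.1 * (((p.2 + (p.1 + α)).choose (p.1 + α) : ℝ) * t ^ p.2)

/-- Summation over `m`: the negative binomial series. -/
lemma hasSum_lagTerm_row (α : ℕ) (y t : ℝ) (ht : |t| < 1) (k : ℕ) :
    HasSum (fun m => lagTerm α y t (k, m))
      (y ^ k / (k ! : ℝ) * t ^ k * (1 / (1 - t) ^ (k + α + 1))) := by
  have ht' : ‖t‖ < 1 := ht
  have h := hasSum_choose_mul_geometric_of_norm_lt_one (k + α) ht'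
  exact h.mul_left (y ^ k / (k ! : ℝ) * t ^ k)

/-- Summation of the row sums over `k`: the exponential series. -/
lemma hasSum_lagTerm_rows (α : ℕ) (y t : ℝ) (ht : |t| < 1) :
    HasSum (fun k : ℕ => y ^ k / (k ! : ℝ) * t ^ k * (1 / (1 - t) ^ (k + α + 1)))
      (Real.exp (y * t / (1 - t)) / (1 - t) ^ (α + 1)) := by
  have h1 : (1 - t) ≠ 0 := by linarith [(abs_lt.mp ht).2]
  have h := (NormedSpace.expSeries_div_hasSum_exp (y * t / (1 - t))).mul_right
    (1 / (1 - t) ^ (α + 1))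
  rw [← Real.exp_eq_exp_ℝ, mul_one_div] at h
  convert! h using 2 with k
  rw [div_pow, mul_pow]
  field_simp
  ring

lemma summable_lagTerm (α : ℕ) (y t : ℝ) (ht : |t| < 1) : Summable (lagTerm α y t) := by
  have ht' : |(|t|)| < 1 := by rwa [abs_abs]
  have habs : (fun p => |lagTerm α y t p|) = lagTerm α |y| |t| := by
    funext p
    simp [lagTerm, abs_mul, abs_div, abs_pow]
  refine Summable.of_abs ?_
  rw [summable_prod_of_nonneg (fun p => abs_nonneg _)]
  simp only [congrFun habs]
  refine ⟨fun k => (hasSum_lagTerm_row α |y| |t| ht' k).summable, ?_⟩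
  simp only [(hasSum_lagTerm_row α |y| |t| ht' _).tsum_eq]
  exact (hasSum_lagTerm_rows α |y| |t| ht').summable

lemma hasSum_lagTerm (α : ℕ) (y t : ℝ) (ht : |t| < 1) :
    HasSum (lagTerm α y t) (Real.exp (y * t / (1 - t)) / (1 - t) ^ (α + 1)) := by
  have h := (summable_lagTerm α y t ht).hasSum
  rwa [(h.prod_fiberwise (hasSum_lagTerm_row α y t ht)).unique
    (hasSum_lagTerm_rows α y t ht)] at h

lemma sum_antidiagonal_lagTerm (n α : ℕ) (x t : ℝ) :
    ∑ p ∈ antidiagonal n, lagTerm α (-x) t p = lag n α x * t ^ n / (n ! : ℝ) := by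
  rw [Finset.Nat.sum_antidiagonal_eq_sum_range_succ_mk, lag, Finset.sum_mul, Finset.sum_div]
  refine Finset.sum_congr rfl fun k hk => ?_
  obtain ⟨m, rfl⟩ := Nat.exists_eq_add_of_le (Nat.lt_succ_iff.mp (Finset.mem_range.mp hk))
  have hc : (m + (k + α)).choose (k + α) = (k + m + α).choose m := by
    rw [show k + m + α = m + (k + α) by ring]
    exact (Nat.choose_symm_add).symm
  have h1 : ((k + m)! : ℝ) ≠ 0 := by exact_mod_cast Nat.factorial_ne_zero _
  simp only [lagTerm, Nat.add_sub_cancel_left, hc]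
  field_simp
  ring

theorem laguerre_egf (α : ℕ) (x t : ℝ) (ht : |t| < 1) :
    HasSum (fun n : ℕ => lag n α x * t ^ n / (n ! : ℝ))
      (Real.exp (-x * t / (1 - t)) / (1 - t) ^ (α + 1)) := by
  have h := hasSum_lagTerm α (-x) t ht
  rw [← Finset.HasAntidiagonal.sigmaAntidiagonalEquivProd.hasSum_iff] at h
  convert h.sigma fun n => hasSum_fintype _ using 2 with n
  rw [← sum_antidiagonal_lagTerm]
  exact (Finset.sum_coe_sort (antidiagonal n) (lagTerm α (-x) t)).symm
end

section
/- For all natural numbers n and m and all real x, y, the Rodrigues-type relation holds: e^{(x+y)/2}·D^{n+m}(e^{−(x+y)/2}·x^n·y^m) = L_{n,m}(x,y), where D is the differential operator sending a smooth function f(x,y) to f_x(x,y) + f_y(x,y) (the sum of its two first-order partial derivatives) and D^{n+m} denotes its (n+m)-fold iterate. -/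
/-!
Since `Dop` is the derivative in the direction `(1, 1)`, the value of `Dop^[N] F` at `(x, y)` is the
`N`-th derivative at `t = 0` of `t ↦ F (x + t) (y + t)`. For the function at hand this is
`(y + t) ^ m * ((x + t) ^ n * exp (-(x + y) / 2 - t))`. Two applications of Leibniz' rule, first
splitting off the power of `y + t` and then that of `x + t`, give exactly the double sum defining
`lag2`: the binomial coefficients are those of the two Leibniz expansions, the factorials come from
differentiating the powers, and the signs `(-1) ^ (i + s)` from differentiating the exponential.
-/

open Nat Finset

/-- Bivariate Laguerre polynomial
`L_{n,m}(x,y) = Σ_{i=0}^m Σ_{s=0}^n (n!·m!)/(i!·s!)·C(m+n, m−i)·C(n+i, n−s)·(−x)^s·(−y)^i`. -/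
noncomputable def lag2 (n m : ℕ) (x y : ℝ) : ℝ :=
  ∑ i ∈ Finset.range (m + 1), ∑ s ∈ Finset.range (n + 1),
    (n ! : ℝ) * (m ! : ℝ) / ((i ! : ℝ) * (s ! : ℝ)) * ((m + n).choose (m - i)) *
      ((n + i).choose (n - s)) * (-x) ^ s * (-y) ^ i

/-- The operator sending a smooth function `f(x,y)` to `f_x(x,y) + f_y(x,y)`,
the sum of its two first-order partial derivatives. -/
noncomputable def Dop (f : ℝ → ℝ → ℝ) : ℝ → ℝ → ℝ :=
  fun x y => deriv (fun u => f u y) x + deriv (fun v => f x v) y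

open scoped ContDiff

/-- `Dop` is the derivative in the direction `(1, 1)`. -/
lemma dop_eq_fderiv {F : ℝ → ℝ → ℝ} (hF : ContDiff ℝ ∞ (Function.uncurry F)) (x y : ℝ) :
    Dop F x y = fderiv ℝ (Function.uncurry F) (x, y) (1, 1) := by
  have hd : HasFDerivAt (Function.uncurry F) (fderiv ℝ (Function.uncurry F) (x, y)) (x, y) :=
    (hF.differentiable (by simp) (x, y)).hasFDerivAt
  have h1 : HasDerivAt (fun u => F u y) (fderiv ℝ (Function.uncurry F) (x, y) (1, 0)) x :=
    HasFDerivAt.comp_hasDerivAt (f := fun u : ℝ => (u, y)) x hd ((hasDerivAt_id x).prodMk (hasDerivAt_const x y))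
  have h2 : HasDerivAt (fun v => F x v) (fderiv ℝ (Function.uncurry F) (x, y) (0, 1)) y :=
    HasFDerivAt.comp_hasDerivAt (f := fun v : ℝ => (x, v)) y hd ((hasDerivAt_const y x).prodMk (hasDerivAt_id y))
  rw [Dop, h1.deriv, h2.deriv, ← map_add]
  simp

lemma contDiff_dop {F : ℝ → ℝ → ℝ} (hF : ContDiff ℝ ∞ (Function.uncurry F)) :
    ContDiff ℝ ∞ (Function.uncurry (Dop F)) := by
  have h : Function.uncurry (Dop F) = fun p => fderiv ℝ (Function.uncurry F) p (1, 1) := by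
    funext ⟨x, y⟩
    exact dop_eq_fderiv hF x y
  rw [h]
  exact (hF.fderiv_right (by simp)).clm_apply contDiff_const

lemma deriv_diagonal {F : ℝ → ℝ → ℝ} (hF : ContDiff ℝ ∞ (Function.uncurry F)) (x y t : ℝ) :
    deriv (fun t => F (x + t) (y + t)) t = Dop F (x + t) (y + t) := by
  have hd := (hF.differentiable (by simp) (x + t, y + t)).hasFDerivAt
  rw [dop_eq_fderiv hF]
  exact (hd.comp_hasDerivAt t
    (((hasDerivAt_id t).const_add x).prodMk ((hasDerivAt_id t).const_add y))).deriv

/-- Iterating `Dop` on a smooth function amounts to iterating the ordinary derivative along the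
diagonal line through the given point. -/
lemma iterate_dop_eq_iteratedDeriv (k : ℕ) {F : ℝ → ℝ → ℝ}
    (hF : ContDiff ℝ ∞ (Function.uncurry F)) (x y : ℝ) :
    Dop^[k] F x y = iteratedDeriv k (fun t => F (x + t) (y + t)) 0 := by
  induction k generalizing F with
  | zero => simp
  | succ k ih =>
    rw [Function.iterate_succ_apply, ih (contDiff_dop hF), iteratedDeriv_succ',
      funext (deriv_diagonal hF x y)]

/-- Leibniz' rule for a product with a power of degree `m`: as the derivatives of the power of
order above `m` vanish, only `m + 1` terms remain. They are indexed by the exponent `i` that is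
left after `m - i` differentiations. -/
lemma iteratedDeriv_pow_mul (k m : ℕ) (y : ℝ) {g : ℝ → ℝ} (hg : ContDiff ℝ ∞ g) :
    iteratedDeriv (k + m) (fun t => (y + t) ^ m * g t) 0 =
      ∑ i ∈ range (m + 1), ((k + m).choose (m - i) : ℝ) * ((m ! : ℝ) / (i ! : ℝ) * y ^ i) *
        iteratedDeriv (k + i) g 0 := by
  have hp (j : ℕ) : iteratedDeriv j (fun t : ℝ => (y + t) ^ m) 0 =
      m.descFactorial j * y ^ (m - j) := by
    simpa using congrFun (iteratedDeriv_comp_const_add j (fun t : ℝ => t ^ m) y) 0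
  rw [iteratedDeriv_fun_mul (by fun_prop) (hg.of_le (by exact_mod_cast le_top)).contDiffAt]
  simp only [hp]
  rw [← sum_subset (range_subset_range.2 (by omega : m + 1 ≤ k + m + 1)), ← sum_flip]
  · refine sum_congr rfl fun i hi => ?_
    have hi : i ≤ m := by simpa [Nat.lt_succ_iff] using hi
    have hf : ((m.descFactorial (m - i) : ℕ) : ℝ) = (m ! : ℝ) / (i ! : ℝ) := by
      rw [eq_div_iff (by positivity)]
      have := Nat.factorial_mul_descFactorial (Nat.sub_le m i)
      rw [Nat.sub_sub_self hi] at this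
      rw [mul_comm]
      exact_mod_cast this
    rw [hf, Nat.sub_sub_self hi, show k + m - (m - i) = k + i by omega]
  · intro j _ hj
    have hj : m < j := by simpa [Nat.lt_succ_iff] using hj
    simp [Nat.descFactorial_eq_zero_iff_lt.2 hj]

lemma iteratedDeriv_exp_sub (k : ℕ) (c : ℝ) :
    iteratedDeriv k (fun t => Real.exp (c - t)) 0 = (-1) ^ k * Real.exp c := by
  have h : (fun t => Real.exp (c - t)) = fun t => Real.exp c * Real.exp (-1 * t) := by
    funext t
    rw [← Real.exp_add]
    ring_nf
  rw [h, iteratedDeriv_const_mul_field, iteratedDeriv_exp_const_mul]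
  simp [mul_comm]

theorem rodrigues_bivariate (n m : ℕ) (x y : ℝ) :
    Real.exp ((x + y) / 2) *
      (Dop^[n + m] (fun u v => Real.exp (-(u + v) / 2) * u ^ n * v ^ m)) x y
      = lag2 n m x y := by
  have hF : ContDiff ℝ ∞ (Function.uncurry
      fun u v : ℝ => Real.exp (-(u + v) / 2) * u ^ n * v ^ m) := by
    unfold Function.uncurry
    fun_prop
  have hline : (fun t : ℝ => Real.exp (-((x + t) + (y + t)) / 2) * (x + t) ^ n * (y + t) ^ m) =
      fun t => (y + t) ^ m * ((x + t) ^ n * Real.exp (-(x + y) / 2 - t)) := by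
    funext t
    rw [show -((x + t) + (y + t)) / 2 = -(x + y) / 2 - t by ring]
    ring
  have hexp : Real.exp ((x + y) / 2) * Real.exp (-(x + y) / 2) = 1 := by
    rw [← Real.exp_add, ← Real.exp_zero]
    ring_nf
  rw [iterate_dop_eq_iteratedDeriv _ hF, hline, iteratedDeriv_pow_mul _ _ _ (by fun_prop), lag2,
    mul_sum]
  refine sum_congr rfl fun i _ => ?_
  rw [add_comm n i, iteratedDeriv_pow_mul _ _ _ (by fun_prop), mul_sum, mul_sum]
  refine sum_congr rfl fun s _ => ?_
  rw [iteratedDeriv_exp_sub, add_comm n m, neg_pow x, neg_pow y, pow_add]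
  linear_combination ((m + n).choose (m - i) : ℝ) * ((m ! : ℝ) / (i ! : ℝ) * y ^ i) *
    (((i + n).choose (n - s) : ℝ) * ((n ! : ℝ) / (s ! : ℝ) * x ^ s) *
      ((-1) ^ i * (-1) ^ s)) * hexp
end

section
/- For all natural numbers n and m and all real (or indeterminate) x, y, one has L_{n,m}(x,y) = Σ_{i=0}^n (n!/i!)·C(n+m, n−i)·L_m^{(i)}(y)·(−x)^i. -/
/-!
Both sides are double sums over the same rectangle of monomials `(-x) ^ s * (-y) ^ i`, so it suffices
to compare coefficients. After the factorials are matched this is the identity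
`choose_mul_choose_swap`: each side equals the trinomial coefficient
`(m + n)! / ((m - i)! (n - s)! (i + s)!)`, which counts the ways of removing from `m + n` points an
`(m - i)`-set and a disjoint `(n - s)`-set, in either order.
-/

open Nat Finset

theorem choose_mul_choose_swap {n m i s : ℕ} (hi : i ≤ m) (hs : s ≤ n) :
    (m + n).choose (m - i) * (n + i).choose (n - s) =
      (n + m).choose (n - s) * (m + s).choose (m - i) := by
  obtain ⟨a, rfl⟩ := Nat.exists_eq_add_of_le hi
  obtain ⟨b, rfl⟩ := Nat.exists_eq_add_of_le hs
  simp only [Nat.add_sub_cancel_left]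
  have h1 := Nat.add_choose_mul_factorial_mul_factorial (i + s + b) a
  have h2 := Nat.add_choose_mul_factorial_mul_factorial (i + s) b
  have h3 := Nat.add_choose_mul_factorial_mul_factorial (i + s + a) b
  have h4 := Nat.add_choose_mul_factorial_mul_factorial (i + s) a
  rw [show i + a + (s + b) = i + s + b + a by ring, show s + b + i = i + s + b by ring,
    show s + b + (i + a) = i + s + b + a by ring, show i + a + s = i + s + a by ring]
  rw [show i + s + a + b = i + s + b + a by ring] at h3
  -- Clear the denominator `a! b! (i + s)!` of the trinomial coefficient.
  have hpos : 0 < a ! * b ! * (i + s)! := by positivity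
  apply Nat.eq_of_mul_eq_mul_right hpos
  rw [← h2] at h1
  rw [← h4] at h3
  linarith

theorem lag2_eq_sum_lag_y (n m : ℕ) (x y : ℝ) :
    lag2 n m x y =
      ∑ i ∈ Finset.range (n + 1),
        (n ! : ℝ) / (i ! : ℝ) * ((n + m).choose (n - i)) * lag m i y * (-x) ^ i := by
  unfold lag2 lag
  rw [Finset.sum_comm]
  refine Finset.sum_congr rfl fun s hs => ?_
  rw [Finset.mul_sum, Finset.sum_mul]
  refine Finset.sum_congr rfl fun i hi => ?_
  have h : ((m + n).choose (m - i) * (n + i).choose (n - s) : ℝ) =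
      (n + m).choose (n - s) * (m + s).choose (m - i) := by
    exact_mod_cast choose_mul_choose_swap (Finset.mem_range_succ_iff.mp hi)
      (Finset.mem_range_succ_iff.mp hs)
  rw [mul_assoc (_ / _) (Nat.cast _ : ℝ) (Nat.cast _ : ℝ), h]
  field_simp
end

section
/- For all natural numbers n and m and all real (or indeterminate) x, y, the bivariate Laguerre polynomials satisfy the symmetry L_{n,m}(x,y) = L_{m,n}(y,x). -/
/-!
The coefficient of `(-x) ^ s * (-y) ^ i` in `lag2 n m x y` is `n! m! / (i! s!)` times the trinomial
coefficient `(m + n)! / ((m - i)! (n - s)! (i + s)!)` (`choose_mul_choose_eq_trinomial`), which is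
invariant under exchanging `(n, s)` with `(m, i)`; interchanging the two sums gives the symmetry.
-/

open Nat Finset

/-- The product of binomials in the coefficient of `(-x) ^ s * (-y) ^ i`, as a trinomial
coefficient: it counts ordered partitions of `m + n` into parts `m - i`, `n - s`, `i + s`. -/
lemma choose_mul_choose_eq_trinomial {n m i s : ℕ} (hi : i ≤ m) (hs : s ≤ n) :
    ((m + n).choose (m - i) : ℝ) * ((n + i).choose (n - s) : ℝ) =
      ((m + n)! : ℝ) / ((m - i)! * (n - s)! * (i + s)!) := by
  obtain ⟨a, rfl⟩ := Nat.exists_eq_add_of_le hi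
  obtain ⟨b, rfl⟩ := Nat.exists_eq_add_of_le hs
  rw [Nat.add_sub_cancel_left, Nat.add_sub_cancel_left,
    show i + a + (s + b) = a + (b + (i + s)) by ring, show s + b + i = b + (i + s) by ring,
    Nat.cast_add_choose, Nat.cast_add_choose]
  field_simp

theorem lag2_symm (n m : ℕ) (x y : ℝ) : lag2 n m x y = lag2 m n y x := by
  unfold lag2
  rw [Finset.sum_comm]
  refine Finset.sum_congr rfl fun s hs => Finset.sum_congr rfl fun i hi => ?_
  have hs' : s ≤ n := Nat.lt_succ_iff.mp (Finset.mem_range.mp hs)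
  have hi' : i ≤ m := Nat.lt_succ_iff.mp (Finset.mem_range.mp hi)
  have key : ((m + n).choose (m - i) : ℝ) * ((n + i).choose (n - s) : ℝ) =
      ((n + m).choose (n - s) : ℝ) * ((m + s).choose (m - i) : ℝ) := by
    rw [choose_mul_choose_eq_trinomial hi' hs', choose_mul_choose_eq_trinomial hs' hi',
      Nat.add_comm n m, Nat.add_comm s i, mul_comm ((m - i)! : ℝ)]
  linear_combination
    ((n ! : ℝ) * (m ! : ℝ) / ((i ! : ℝ) * (s ! : ℝ)) * (-x) ^ s * (-y) ^ i) * key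
end

section
/- (Theorem 2, identity (18).) For every natural number k ≥ 1 and all real x, y: Σ_{n=0}^k C(k,n)·L_{n,k−n}(x,y) = 2^k·L_k((x+y)/2). -/
/-!
Write `m = k - n`. Since `C(k,n) n! m! = k!`, the left side is `k!` times the sum over
`n, i, s` of `C(k, m-i) C(n+i, n-s) (-x)^s (-y)^i / (i! s!)`. With `j = i + s` and `t = n - s`,
the two binomial coefficients multiply to `C(k, j) C(k-j, t)` (`summand_eq`, both sides being
the same multinomial coefficient). For fixed `j` the sum over `t` is then `2^(k-j)`, and the sum
over `i + s = j` is `(-x-y)^j / j!` by the binomial theorem (`sum_exp_antidiagonal`); this is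
the `j`-th term of `2^k L_k((x+y)/2)`.
-/

open Nat Finset

/-- The coefficient identity, with `n = s + t`, `m = i + u` and `k = n + m`. -/
lemma coeff_eq (i s t u : ℕ) :
    ((s + t + (i + u)).choose (s + t) : ℝ) *
      (((s + t)! : ℝ) * ((i + u)! : ℝ) / ((i ! : ℝ) * (s ! : ℝ)) *
        ((i + u + (s + t)).choose u) * ((s + t + i).choose t)) =
    ((s + t + (i + u))! : ℝ) * ((s + t + (i + u)).choose (i + s)) *
      ((t + u).choose t) / ((i ! : ℝ) * (s ! : ℝ)) := by
  have e1 : i + u + (s + t) = u + (s + t + i) := by ring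
  have e2 : s + t + (i + u) = (i + s) + (t + u) := by ring
  have e3 : s + t + i = t + (i + s) := by ring
  have e4 : u + (t + (i + s)) = (i + s) + (t + u) := by ring
  rw [Nat.cast_add_choose ℝ (a := s + t) (b := i + u), e1, e2, e3,
    Nat.cast_add_choose ℝ, Nat.cast_add_choose ℝ, Nat.cast_add_choose ℝ,
    Nat.cast_add_choose ℝ, e4]
  have h : ∀ a : ℕ, (a ! : ℝ) ≠ 0 := fun a => by exact_mod_cast Nat.factorial_ne_zero a
  have := h i; have := h s; have := h t; have := h u; have := h (s + t)
  have := h (i + u); have := h (i + s); have := h (t + u); have := h (t + (i + s))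
  field_simp

/-- `coeff_eq` in terms of `k`, `j = i + s` and `t`, with the monomials attached. -/
lemma summand_eq (k i s t : ℕ) (h : i + s + t ≤ k) (x y : ℝ) :
    (k.choose (s + t) : ℝ) *
      (((s + t)! : ℝ) * ((k - (s + t))! : ℝ) / ((i ! : ℝ) * (s ! : ℝ)) *
        ((k - (s + t) + (s + t)).choose (k - (s + t) - i)) *
        ((s + t + i).choose (s + t - s)) * (-x) ^ s * (-y) ^ i) =
    (k ! : ℝ) * (k.choose (i + s)) * ((k - (i + s)).choose t) *
      ((-y) ^ i / (i ! : ℝ) * ((-x) ^ s / (s ! : ℝ))) := by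
  obtain ⟨u, rfl⟩ : ∃ u, k = s + t + (i + u) := ⟨k - (i + s + t), by omega⟩
  have e1 : s + t + (i + u) - (s + t) = i + u := by omega
  have e2 : s + t + (i + u) - (i + s) = t + u := by omega
  have e3 : i + u - i = u := by omega
  have e4 : s + t - s = t := by omega
  rw [e1, e2, e3, e4]
  linear_combination (-x) ^ s * (-y) ^ i * coeff_eq i s t u

/-- The binomial theorem in divided-power form. -/
lemma sum_exp_antidiagonal (j : ℕ) (a b : ℝ) :
    ∑ p ∈ antidiagonal j, a ^ p.1 / (p.1 ! : ℝ) * (b ^ p.2 / (p.2 ! : ℝ)) =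
      (a + b) ^ j / (j ! : ℝ) := by
  rw [(Commute.all a b).add_pow', Finset.sum_div]
  refine Finset.sum_congr rfl fun p hp => ?_
  obtain rfl := HasAntidiagonal.mem_antidiagonal.1 hp
  have h : ∀ a : ℕ, (a ! : ℝ) ≠ 0 := fun a => by exact_mod_cast Nat.factorial_ne_zero a
  have := h p.1; have := h p.2; have := h (p.1 + p.2)
  rw [nsmul_eq_mul, Nat.cast_add_choose ℝ]
  field_simp

theorem lag2_binomial_sum (k : ℕ) (hk : 1 ≤ k) (x y : ℝ) :
    ∑ n ∈ Finset.range (k + 1), (k.choose n : ℝ) * lag2 n (k - n) x y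
      = 2 ^ k * lag k 0 ((x + y) / 2) := by
  have key : ∑ n ∈ Finset.range (k + 1), (k.choose n : ℝ) * lag2 n (k - n) x y =
      ∑ j ∈ Finset.range (k + 1), ∑ p ∈ antidiagonal j, ∑ t ∈ Finset.range (k - j + 1),
        (k ! : ℝ) * (k.choose j) * ((k - j).choose t) *
          ((-y) ^ p.1 / (p.1 ! : ℝ) * ((-x) ^ p.2 / (p.2 ! : ℝ))) := by
    simp only [lag2, Finset.mul_sum, Finset.sum_sigma']
    -- `(n, i, s)` corresponds to `(j, (i, s), t) = (i + s, (i, s), n - s)`.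
    refine Finset.sum_nbij' (fun q => ⟨q.2.1 + q.2.2, ⟨(q.2.1, q.2.2), q.1 - q.2.2⟩⟩)
      (fun r => ⟨r.2.1.2 + r.2.2, ⟨r.2.1.1, r.2.1.2⟩⟩) ?_ ?_ ?_ ?_ ?_
    · rintro ⟨n, i, s⟩ h
      simp only [mem_sigma, mem_range, HasAntidiagonal.mem_antidiagonal] at h ⊢
      exact ⟨by omega, by trivial, by omega⟩
    · rintro ⟨j, ⟨i, s⟩, t⟩ h
      simp only [mem_sigma, mem_range, HasAntidiagonal.mem_antidiagonal] at h ⊢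
      omega
    · rintro ⟨n, i, s⟩ h
      simp only [mem_sigma, mem_range] at h
      have : s + (n - s) = n := by omega
      simp [this]
    · rintro ⟨j, ⟨i, s⟩, t⟩ h
      simp only [mem_sigma, mem_range, HasAntidiagonal.mem_antidiagonal] at h
      obtain ⟨-, rfl, -⟩ := h
      simp
    · rintro ⟨n, i, s⟩ h
      simp only [mem_sigma, mem_range] at h
      obtain ⟨t, rfl⟩ : ∃ t, n = s + t := ⟨n - s, by omega⟩
      have := summand_eq k i s t (by omega) x y
      simpa using this
  rw [key, lag, Finset.mul_sum]
  refine Finset.sum_congr rfl fun j hj => ?_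
  have hj : j ≤ k := by simpa [Nat.lt_succ_iff] using hj
  have hpow : ∑ t ∈ Finset.range (k - j + 1), ((k - j).choose t : ℝ) = 2 ^ (k - j) := by
    exact_mod_cast Nat.sum_range_choose (k - j)
  simp only [← Finset.sum_mul, ← Finset.mul_sum]
  rw [hpow, sum_exp_antidiagonal, Nat.add_zero, Nat.choose_symm hj,
    show -((x + y) / 2) = (-y + -x) / 2 by ring, div_pow,
    show (2 : ℝ) ^ k = 2 ^ (k - j) * 2 ^ j by rw [← pow_add, Nat.sub_add_cancel hj]]
  field_simp
end

section
/- (Theorem 2, identity (19).) For every natural number k ≥ 1 and all real x, y: Σ_{n=0}^k (−1)^{k−n}·C(k,n)·L_{n,k−n}(x,y) = (y − x)^k. -/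
/-!
Since `C(k,n) n! (k-n)! = k!`, the term with indices `n, i, s` of the left-hand side is
`(-1)^(k-n) (k!)² / (i! s! (i+s)! p! q!) (-x)^s (-y)^i`, where `p = k - n - i` and `q = n - s`.
Fix `t = i + s` and `s`. The remaining sum over `q + p = k - t` is
a multiple of `∑ q, (-1)^p C(k-t,q) = (1 - 1)^(k-t)`, so only `t = k` survives, and the terms
with `i + s = k` are the binomial expansion of `(-x + y)^k`.
-/

open Nat Finset

/-- One term of the expanded alternating sum, with `m = i + p` and `n = s + q`, so that no
subtraction occurs. -/
lemma lag2_term (i p s q : ℕ) (x y : ℝ) :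
    (-1 : ℝ) ^ (i + p) * ((i + p + (s + q)).choose (s + q) : ℝ) *
      (((s + q) ! : ℝ) * ((i + p) ! : ℝ) / ((i ! : ℝ) * (s ! : ℝ)) *
        ((i + p + (s + q)).choose p) * ((s + q + i).choose q) * (-x) ^ s * (-y) ^ i)
    = ((i + p + (s + q)) ! : ℝ) ^ 2 / ((s + i) ! * (q + p) ! * i ! * s !) *
        ((-x) ^ s * y ^ i) * ((1 : ℝ) ^ q * (-1) ^ p * ((q + p).choose q : ℝ)) := by
  have h1 : ((i + p + (s + q)).choose (s + q) : ℝ)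
      = (i + p + (s + q)) ! / ((s + q) ! * (i + p) !) := by
    rw [add_comm (i + p), Nat.cast_add_choose]
  have h2 : ((i + p + (s + q)).choose p : ℝ)
      = (i + p + (s + q)) ! / (p ! * (s + q + i) !) := by
    rw [show i + p + (s + q) = p + (s + q + i) by ring, Nat.cast_add_choose]
  have h3 : ((s + q + i).choose q : ℝ) = (s + q + i) ! / (q ! * (s + i) !) := by
    rw [show s + q + i = q + (s + i) by ring, Nat.cast_add_choose]
  have h4 : (-1 : ℝ) ^ (i + p) * (-y) ^ i = y ^ i * (-1) ^ p := by
    rw [pow_add, mul_right_comm, ← mul_pow]; simp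
  have f : ∀ a : ℕ, (a ! : ℝ) ≠ 0 := fun a => by positivity
  rw [h1, h2, h3, Nat.cast_add_choose, one_pow]
  trans ((i + p + (s + q)) ! : ℝ) ^ 2 / ((s + i) ! * i ! * s ! * p ! * q !) * (-x) ^ s *
    ((-1 : ℝ) ^ (i + p) * (-y) ^ i)
  · have := f (s + q); have := f (i + p); have := f (s + q + i); have := f (s + i)
    have := f i; have := f s; have := f p; have := f q
    field_simp
  · rw [h4]
    have := f (q + p); have := f (s + i)
    have := f i; have := f s; have := f p; have := f q
    field_simp

theorem lag2_alternating_sum (k : ℕ) (hk : 1 ≤ k) (x y : ℝ) :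
    ∑ n ∈ Finset.range (k + 1), (-1 : ℝ) ^ (k - n) * (k.choose n : ℝ) * lag2 n (k - n) x y
      = (y - x) ^ k := by
  have reindex : ∑ n ∈ Finset.range (k + 1),
        (-1 : ℝ) ^ (k - n) * (k.choose n : ℝ) * lag2 n (k - n) x y
      = ∑ t ∈ range (k + 1), ∑ s ∈ range (t + 1), ∑ q ∈ range (k - t + 1),
          (k ! : ℝ) ^ 2 / (t ! * (k - t) ! * (t - s) ! * s !) * ((-x) ^ s * y ^ (t - s)) *
            ((1 : ℝ) ^ q * (-1) ^ (k - t - q) * ((k - t).choose q : ℝ)) := by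
    simp only [lag2, mul_sum]
    simp only [sum_sigma']
    refine sum_bij' (fun a _ => ⟨a.2.1 + a.2.2, a.2.2, a.1 - a.2.2⟩)
      (fun b _ => ⟨b.2.1 + b.2.2, b.1 - b.2.1, b.2.1⟩) ?_ ?_ ?_ ?_ ?_
    · rintro ⟨n, i, s⟩ h
      simp only [mem_sigma, mem_range] at h ⊢
      omega
    · rintro ⟨t, s, q⟩ h
      simp only [mem_sigma, mem_range] at h ⊢
      omega
    · rintro ⟨n, i, s⟩ h
      simp only [mem_sigma, mem_range] at h
      have e1 : s + (n - s) = n := by omega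
      have e2 : i + s - s = i := by omega
      simp only [e1, e2]
    · rintro ⟨t, s, q⟩ h
      simp only [mem_sigma, mem_range] at h
      have e1 : t - s + s = t := by omega
      have e2 : s + q - s = q := by omega
      simp only [e1, e2]
    · rintro ⟨n, i, s⟩ h
      simp only [mem_sigma, mem_range] at h
      obtain ⟨q, rfl⟩ : ∃ q, n = s + q := ⟨n - s, by omega⟩
      obtain ⟨p, rfl⟩ : ∃ p, k = i + p + (s + q) := ⟨k - (s + q) - i, by omega⟩
      have e1 : i + p + (s + q) - (s + q) = i + p := by omega
      have e2 : i + p - i = p := by omega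
      have e3 : s + q - s = q := by omega
      have e4 : i + p + (s + q) - (i + s) = q + p := by omega
      have e5 : q + p - q = p := by omega
      have e6 : i + s - s = i := by omega
      simp only [e1, e2, e3, e4, e5, e6]
      rw [lag2_term, add_comm i s]
  rw [reindex]
  simp only [← mul_sum, ← add_pow]
  refine (sum_eq_single_of_mem k (by simp) ?_).trans ?_
  rotate_left
  · rw [show y - x = -x + y by ring, add_pow (-x) y]
    refine sum_congr rfl fun s hs => ?_
    have hs' : s ≤ k := by simpa [Nat.lt_succ_iff] using hs
    rw [Nat.cast_choose ℝ hs']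
    simp only [Nat.sub_self, pow_zero, Nat.factorial_zero, Nat.cast_one]
    have f : ∀ a : ℕ, (a ! : ℝ) ≠ 0 := fun a => by positivity
    have := f k; have := f s; have := f (k - s)
    field_simp
  · intro t ht htk
    have h0 : k - t ≠ 0 := by
      have := mem_range.1 ht
      omega
    simp [h0]
end

section
/- For all natural numbers n and m, the bivariate Laguerre polynomial L_{n,m}(x,y), viewed as a polynomial in two variables over ℤ, has total degree n + m, and its coefficient of the monomial x^n·y^m equals (−1)^{n+m}. -/
/-!
After moving signs into coefficients, the `(i, s)` summand of `lag2P n m` is a scalar multiple of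
the monomial `x ^ s * y ^ i`, with `s ≤ n` and `i ≤ m`. Hence the total degree is at most `n + m`,
and distinct index pairs give distinct monomials, so only `(i, s) = (m, n)` contributes to
`x ^ n * y ^ m`. There the factorial quotients and binomials are all `1`, leaving the sign
`(-1) ^ (n + m)`; as this is nonzero, the degree bound is attained.
-/

open Nat Finset

/-- Bivariate Laguerre polynomial `L_{n,m}(x,y)` as a polynomial in two variables over `ℤ`
(the variable `X 0` plays the role of `x` and `X 1` the role of `y`); here the rational
numbers `(n!·m!)/(i!·s!)` are integers since `s ≤ n` and `i ≤ m`. -/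
noncomputable def lag2P (n m : ℕ) : MvPolynomial (Fin 2) ℤ :=
  ∑ i ∈ Finset.range (m + 1), ∑ s ∈ Finset.range (n + 1),
    MvPolynomial.C (((n ! / s !) * (m ! / i !) * (m + n).choose (m - i) *
        (n + i).choose (n - s) : ℕ) : ℤ) *
      (-MvPolynomial.X 0) ^ s * (-MvPolynomial.X 1) ^ i

/-- Each summand of `lag2P` is a single monomial, the signs being moved into the coefficient. -/
lemma lag2P_eq_sum_monomial (n m : ℕ) :
    lag2P n m = ∑ i ∈ Finset.range (m + 1), ∑ s ∈ Finset.range (n + 1),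
      MvPolynomial.monomial (Finsupp.single (0 : Fin 2) s + Finsupp.single 1 i)
        ((-1 : ℤ) ^ (s + i) * (((n ! / s !) * (m ! / i !) * (m + n).choose (m - i) *
          (n + i).choose (n - s) : ℕ) : ℤ)) := by
  unfold lag2P
  refine Finset.sum_congr rfl fun i _ => Finset.sum_congr rfl fun s _ => ?_
  generalize (((n ! / s !) * (m ! / i !) * (m + n).choose (m - i) *
          (n + i).choose (n - s) : ℕ) : ℤ) = c
  have h : MvPolynomial.monomial (Finsupp.single (0 : Fin 2) s + Finsupp.single 1 i)
        ((-1 : ℤ) ^ (s + i) * c) = MvPolynomial.C ((-1 : ℤ) ^ (s + i) * c) *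
          (MvPolynomial.X 0 ^ s * MvPolynomial.X 1 ^ i) := by
    rw [MvPolynomial.X_pow_eq_monomial, MvPolynomial.X_pow_eq_monomial,
      MvPolynomial.monomial_mul, MvPolynomial.C_mul_monomial]
    simp
  rw [h, neg_pow (MvPolynomial.X 0 : MvPolynomial (Fin 2) ℤ),
    neg_pow (MvPolynomial.X 1 : MvPolynomial (Fin 2) ℤ)]
  simp only [map_mul, map_pow, map_neg, map_one]
  ring

lemma single_add_single_inj {s i n m : ℕ} :
    Finsupp.single (0 : Fin 2) s + Finsupp.single 1 i = Finsupp.single 0 n + Finsupp.single 1 m ↔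
      s = n ∧ i = m := by
  constructor
  · intro h
    have h0 := DFunLike.congr_fun h 0
    have h1 := DFunLike.congr_fun h 1
    simp at h0 h1
    exact ⟨h0, h1⟩
  · rintro ⟨rfl, rfl⟩
    rfl

lemma coeff_lag2P_top (n m : ℕ) :
    MvPolynomial.coeff (Finsupp.single 0 n + Finsupp.single 1 m) (lag2P n m)
      = (-1 : ℤ) ^ (n + m) := by
  rw [lag2P_eq_sum_monomial]
  simp only [MvPolynomial.coeff_sum, MvPolynomial.coeff_monomial, single_add_single_inj]
  rw [Finset.sum_eq_single_of_mem m (by simp), Finset.sum_eq_single_of_mem n (by simp)]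
  · simp [Nat.div_self (Nat.factorial_pos _)]
  · intro s _ hs
    simp [hs]
  · intro i _ hi
    simp [hi]

lemma totalDegree_lag2P_le (n m : ℕ) : (lag2P n m).totalDegree ≤ n + m := by
  rw [lag2P_eq_sum_monomial]
  refine MvPolynomial.totalDegree_finsetSum_le fun i hi =>
    MvPolynomial.totalDegree_finsetSum_le fun s hs => ?_
  refine (MvPolynomial.totalDegree_monomial_le _ _).trans ?_
  rw [Finset.mem_range] at hi hs
  rw [Finsupp.sum_add_index' (fun _ => rfl) (fun _ _ _ => rfl),
    Finsupp.sum_single_index rfl, Finsupp.sum_single_index rfl]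
  simp only [id]
  omega

theorem lag2P_totalDegree_and_leading_coeff (n m : ℕ) :
    (lag2P n m).totalDegree = n + m ∧
    MvPolynomial.coeff (Finsupp.single 0 n + Finsupp.single 1 m) (lag2P n m)
      = (-1 : ℤ) ^ (n + m) := by
  refine ⟨le_antisymm (totalDegree_lag2P_le n m) ?_, coeff_lag2P_top n m⟩
  have hmem : Finsupp.single 0 n + Finsupp.single 1 m ∈ (lag2P n m).support := by
    rw [MvPolynomial.mem_support_iff, coeff_lag2P_top]
    exact pow_ne_zero _ (by norm_num)
  have h := MvPolynomial.le_totalDegree hmem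
  rwa [Finsupp.sum_add_index' (fun _ => rfl) (fun _ _ _ => rfl),
    Finsupp.sum_single_index rfl, Finsupp.sum_single_index rfl] at h
end
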